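/- arXiv:gr-qc/9905107 — 2 statements merged into one kernel-verified Lean document; each statement's English description precedes it below -/
import Mathlib

section
/- Fix a point of ℝ^{1+n} and let g_{μν} (μ, ν = 0,…,n) be a symmetric matrix with g_{0i} = 0 for i = 1,…,n and g_{00} ≠ 0. Let bⁱ_j and bⁱ_0 (i, j = 1,…,n) be real numbers satisfying the antisymmetry condition Σ_i (g_{ik} bⁱ_j + g_{ij} bⁱ_k) = 0 for all j, k. Define σ⁰_0 := 0, σ⁰_k := −(1/g_{00}) Σ_j g_{kj} bʲ_0, σⁱ_0 := bⁱ_0, and σⁱ_k := bⁱ_k. Then Σ_{μ,ν,λ} g_{μν} σ^μ_λ v^λ v^ν = 0 for every vector v ∈ ℝ^{1+n}. (Hence a Lorentz-type plus potential external force admits a relativization ẍ^μ = {_λ{}^μ{}_ν} ẋ^λ ẋ^ν + σ^μ_λ ẋ^λ compatible with the relativistic hyperboloid.) -/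
open scoped BigOperators

/-- Pointwise verification that the soldering form of a Lorentz-type plus potential force
`σ⁰₀ = 0`, `σ⁰ₖ = −g_{kj} bʲ₀ / g₀₀`, `σⁱ₀ = bⁱ₀`, `σⁱₖ = bⁱₖ` satisfies the
compatibility condition `g_{μν} σ^μ_λ v^λ v^ν = 0` with a metric `g` having `g₀ᵢ = 0`,
`g₀₀ ≠ 0`, provided `g_{ik} bⁱⱼ + g_{ij} bⁱₖ = 0`. -/
theorem stmt_11 (n : ℕ)
    (g : Fin (n + 1) → Fin (n + 1) → ℝ)
    (hgsym : ∀ μ ν, g μ ν = g ν μ)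
    (hg0i : ∀ i : Fin n, g 0 i.succ = 0)
    (hg00 : g 0 0 ≠ 0)
    (b : Fin n → Fin (n + 1) → ℝ)
    (hanti : ∀ j k : Fin n, ∑ i, (g i.succ k.succ * b i j.succ + g i.succ j.succ * b i k.succ) = 0)
    (σ : Fin (n + 1) → Fin (n + 1) → ℝ)
    (hσ00 : σ 0 0 = 0)
    (hσ0k : ∀ k : Fin n, σ 0 k.succ = -(1 / g 0 0) * ∑ j, g k.succ j.succ * b j 0)
    (hσi0 : ∀ i : Fin n, σ i.succ 0 = b i 0)
    (hσik : ∀ i k : Fin n, σ i.succ k.succ = b i k.succ) :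
    ∀ v : Fin (n + 1) → ℝ, ∑ μ, ∑ ν, ∑ lam, g μ ν * σ μ lam * v lam * v ν = 0 := by
  intro v
  have hgi0 : ∀ i : Fin n, g i.succ 0 = 0 := fun i => by rw [hgsym, hg0i]
  have hmix : ∀ k : Fin n, ∑ μ, g μ 0 * σ μ k.succ + ∑ μ, g μ k.succ * σ μ 0 = 0 := by
    intro k
    rw [Fin.sum_univ_succ, Fin.sum_univ_succ]
    simp only [hgi0, hg0i, hσ0k, hσi0, zero_mul, Finset.sum_const_zero, add_zero, zero_add]
    have h : ∑ j, g k.succ j.succ * b j 0 = ∑ i : Fin n, g i.succ k.succ * b i 0 :=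
      Finset.sum_congr rfl fun i _ => by rw [hgsym]
    rw [h]
    field_simp
    ring
  have hA : ∀ ν lam, ∑ μ, g μ ν * σ μ lam + ∑ μ, g μ lam * σ μ ν = 0 := by
    intro ν lam
    refine Fin.cases ?_ (fun k => ?_) ν
    · refine Fin.cases ?_ (fun j => ?_) lam
      · simp [Fin.sum_univ_succ, hgi0, hσ00]
      · exact hmix j
    · refine Fin.cases ?_ (fun j => ?_) lam
      · rw [add_comm]
        exact hmix k
      · rw [Fin.sum_univ_succ, Fin.sum_univ_succ]
        simp only [hg0i, hσik, zero_mul, zero_add]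
        rw [← Finset.sum_add_distrib]
        exact hanti j k
  have e1 : ∑ μ, ∑ ν, ∑ lam, g μ ν * σ μ lam * v lam * v ν
      = ∑ ν, ∑ lam, (∑ μ, g μ ν * σ μ lam) * (v lam * v ν) := by
    rw [Finset.sum_comm]
    refine Finset.sum_congr rfl fun ν _ => ?_
    rw [Finset.sum_comm]
    refine Finset.sum_congr rfl fun lam _ => ?_
    rw [Finset.sum_mul]
    exact Finset.sum_congr rfl fun μ _ => by ring
  have e2 : ∑ ν, ∑ lam, (∑ μ, g μ ν * σ μ lam) * (v lam * v ν)
      = ∑ ν, ∑ lam, (∑ μ, g μ lam * σ μ ν) * (v lam * v ν) := by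
    rw [Finset.sum_comm]
    refine Finset.sum_congr rfl fun ν _ => Finset.sum_congr rfl fun lam _ => ?_
    rw [mul_comm (v ν)]
  have e3 : ∑ ν, ∑ lam, (∑ μ, g μ ν * σ μ lam) * (v lam * v ν)
      + ∑ ν, ∑ lam, (∑ μ, g μ lam * σ μ ν) * (v lam * v ν) = 0 := by
    rw [← Finset.sum_add_distrib]
    refine Finset.sum_eq_zero fun ν _ => ?_
    rw [← Finset.sum_add_distrib]
    refine Finset.sum_eq_zero fun lam _ => ?_
    rw [← add_mul, hA, zero_mul]
  rw [e1]
  linarith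
end

section
/- Let η be the Minkowski bilinear form on ℝ^{1+3}, η(u, w) = u⁰w⁰ − Σ_{i=1}^3 uⁱwⁱ, and let ξ : ℝ^{1+3} → ℝ^{1+3} be smooth. Suppose c : ℝ → ℝ^{1+3} is a C² curve satisfying c''(t) = ξ(c(t)) − η(ξ(c(t)), c'(t)) c'(t) for all t, and η(c'(t₀), c'(t₀)) = 1 for some t₀. Then η(c'(t), c'(t)) = 1 for all t. (Thus the relativization ẍ^λ = ξ^λ − η_{αβ} ξ^β ẋ^α ẋ^λ of a force ξ preserves the relativistic hyperboloid of 4-velocities.) -/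
open scoped BigOperators

/-- The Minkowski bilinear form of signature `(+,−,−,−)` on `ℝ^{1+3}`. -/
def mink (u w : Fin 4 → ℝ) : ℝ :=
  u 0 * w 0 - ∑ i : Fin 3, u i.succ * w i.succ

/-- The relativization `c̈ = ξ(c) − η(ξ(c), ċ) ċ` of a force field `ξ` on Minkowski space
preserves the relativistic hyperboloid `η(ċ, ċ) = 1` of 4-velocities. -/
theorem stmt_12
    (ξ : (Fin 4 → ℝ) → Fin 4 → ℝ)
    (hξ : ∀ lam, ContDiff ℝ (⊤ : ℕ∞) (fun x => ξ x lam))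
    (c : ℝ → Fin 4 → ℝ)
    (hc : ∀ μ, ContDiff ℝ 2 (fun t => c t μ))
    (heq : ∀ (t : ℝ) (μ : Fin 4),
      deriv (deriv (fun s => c s μ)) t
        = ξ (c t) μ
          - mink (ξ (c t)) (fun ν => deriv (fun s => c s ν) t)
              * deriv (fun s => c s μ) t)
    (t₀ : ℝ)
    (h₀ : mink (fun ν => deriv (fun s => c s ν) t₀) (fun ν => deriv (fun s => c s ν) t₀) = 1) :
    ∀ t : ℝ, mink (fun ν => deriv (fun s => c s ν) t) (fun ν => deriv (fun s => c s ν) t) = 1 := by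
  have hv : ∀ μ, ContDiff ℝ 1 (deriv (fun s => c s μ)) := fun μ =>
    (contDiff_succ_iff_deriv.1 (show ContDiff ℝ (1 + 1) (fun t => c t μ) from by
      rw [one_add_one_eq_two]; exact hc μ)).2.2
  have hd : ∀ μ t, HasDerivAt (deriv (fun s => c s μ)) (deriv (deriv (fun s => c s μ)) t) t :=
    fun μ t => ((hv μ).differentiable one_ne_zero t).hasDerivAt
  have hcc : Continuous c := continuous_pi fun μ => (hc μ).continuous
  have hξc : ∀ μ, Continuous (fun t => ξ (c t) μ) := fun μ => (hξ μ).continuous.comp hcc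
  have hvc : ∀ μ, Continuous (deriv (fun s => c s μ)) := fun μ => (hv μ).continuous
  have ha : Continuous (fun t => 2 * mink (ξ (c t)) (fun ν => deriv (fun s => c s ν) t)) := by
    unfold mink
    exact continuous_const.mul (((hξc 0).mul (hvc 0)).sub
      (continuous_finsetSum _ fun i _ => (hξc i.succ).mul (hvc i.succ)))
  set a : ℝ → ℝ := fun t => 2 * mink (ξ (c t)) (fun ν => deriv (fun s => c s ν) t) with ha_def
  set f : ℝ → ℝ := fun t =>
    mink (fun ν => deriv (fun s => c s ν) t) (fun ν => deriv (fun s => c s ν) t) - 1 with hf_def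
  have hf : ∀ t, HasDerivAt f (-(a t * f t)) t := by
    intro t
    have h := (((hd 0 t).mul (hd 0 t)).sub (HasDerivAt.fun_sum (u := Finset.univ)
      fun (i : Fin 3) _ => (hd i.succ t).mul (hd i.succ t))).sub_const 1
    refine h.congr_deriv ?_
    simp only [heq, hf_def, ha_def, mink, Fin.sum_univ_three]
    ring
  have hA : ∀ t, HasDerivAt (fun t => ∫ s in t₀..t, a s) (a t) t := fun t =>
    intervalIntegral.integral_hasDerivAt_right (ha.intervalIntegrable _ _)
      (ha.stronglyMeasurableAtFilter _ _) ha.continuousAt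
  have hg : ∀ t, HasDerivAt (fun t => f t * Real.exp (∫ s in t₀..t, a s)) 0 t := fun t =>
    ((hf t).mul (hA t).exp).congr_deriv (by ring)
  intro t
  have hconst := is_const_of_deriv_eq_zero (fun t => (hg t).differentiableAt)
    (fun t => (hg t).deriv) t t₀
  have hf0 : f t₀ = 0 := by simp only [hf_def, h₀, sub_self]
  simp only [hf0, zero_mul, mul_eq_zero, Real.exp_ne_zero, or_false] at hconst
  exact sub_eq_zero.1 hconst
end
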